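/- Assume the dual pair (E, E') is (K) over A. If the right A-module E is flat, then the left A-module E' is 1-injective; that is, whenever a sequence A^{1×k_1} →(•P_1) A^{1×k_2} →(•P_2) A^{1×k_3} →(•P_3) A^{1×k_4} of right multiplications by matrices P_1 ∈ A^{k_1×k_2}, P_2 ∈ A^{k_2×k_3}, P_3 ∈ A^{k_3×k_4} is exact at A^{1×k_2} and at A^{1×k_3}, the induced sequence (E')^{k_3} →(P_2•) (E')^{k_2} →(P_1•) (E')^{k_1} is exact. -/

import Mathlib

/-- Right multiplication `x ↦ x P` by the matrix `P ∈ A^{q×r}` on row vectors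
`x ∈ A^{1×q}`: `(x P) j = ∑ i, x i * P i j`. -/
def rmulA {A : Type*} [Ring A] {q r : ℕ} (P : Matrix (Fin q) (Fin r) A) :
    (Fin q → A) → (Fin r → A) :=
  fun x j => ∑ i, x i * P i j

/-- Right multiplication `x ↦ x P` by the matrix `P ∈ A^{q×r}` on row vectors
`x ∈ E^{1×q}` with entries in a right `A`-module `E` (the right action of `A` on `E`
being encoded as a left `Aᵐᵒᵖ`-action): `(x P) j = ∑ i, x i • P i j`. -/
def rmulE {A E : Type*} [Ring A] [AddCommGroup E] [Module Aᵐᵒᵖ E] {q r : ℕ}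
    (P : Matrix (Fin q) (Fin r) A) : (Fin q → E) → (Fin r → E) :=
  fun x j => ∑ i, MulOpposite.op (P i j) • x i

/-- Left multiplication `x' ↦ P x'` by the matrix `P ∈ A^{q×r}` on column vectors
`x' ∈ (E')^r` with entries in a left `A`-module `E'`: `(P x') i = ∑ j, P i j • x' j`. -/
def lmulE' {A E' : Type*} [Ring A] [AddCommGroup E'] [Module A E'] {q r : ℕ}
    (P : Matrix (Fin q) (Fin r) A) : (Fin r → E') → (Fin q → E') :=
  fun x' i => ∑ j, P i j • x' j

/-- The weak topology on `X` determined by a pairing `B : X → Y → 𝕜`,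
i.e. the coarsest topology making every map `x ↦ B x y` (`y ∈ Y`) continuous. -/
noncomputable def weakTopology {𝕜 X Y : Type*} [TopologicalSpace 𝕜]
    (B : X → Y → 𝕜) : TopologicalSpace X :=
  TopologicalSpace.induced B Pi.topologicalSpace

/-- Flatness of the right `A`-module `E` (`A` not necessarily commutative), expressed
by the standard equational criterion: every relation `∑ i, x i • a i = 0` in `E`
comes from relations in `A`. -/
def RightFlat (A E : Type*) [Ring A] [AddCommGroup E] [Module Aᵐᵒᵖ E] : Prop :=
  ∀ (q : ℕ) (a : Fin q → A) (x : Fin q → E),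
    ∑ i, MulOpposite.op (a i) • x i = 0 →
    ∃ (r : ℕ) (y : Fin r → E) (Q : Matrix (Fin r) (Fin q) A),
      (∀ j, ∑ i, Q j i * a i = 0) ∧ ∀ i, x i = ∑ j, MulOpposite.op (Q j i) • y j

/-- The weak topology `σ(E^{1×k}, (E')^k)` on `E^{1×k}` determined by the componentwise
extension `⟨x, x'⟩ = ∑ i, ⟨x i, x' i⟩` of the duality bracket `B` to `E^{1×k} × (E')^k`. -/
noncomputable def sigmaRow {𝕜 E E' : Type*} [RCLike 𝕜] [AddCommGroup E] [Module 𝕜 E]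
    [AddCommGroup E'] [Module 𝕜 E'] (B : E →ₗ[𝕜] E' →ₗ[𝕜] 𝕜) (k : ℕ) :
    TopologicalSpace (Fin k → E) :=
  weakTopology fun (x : Fin k → E) (x' : Fin k → E') => ∑ i, B (x i) (x' i)

/-- The weak topology `σ((E')^k, E^{1×k})` on `(E')^k` determined by the componentwise
extension `⟨x, x'⟩ = ∑ i, ⟨x i, x' i⟩` of the duality bracket `B` to `E^{1×k} × (E')^k`. -/
noncomputable def sigmaCol {𝕜 E E' : Type*} [RCLike 𝕜] [AddCommGroup E] [Module 𝕜 E]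
    [AddCommGroup E'] [Module 𝕜 E'] (B : E →ₗ[𝕜] E' →ₗ[𝕜] 𝕜) (k : ℕ) :
    TopologicalSpace (Fin k → E') :=
  weakTopology fun (x' : Fin k → E') (x : Fin k → E) => ∑ i, B (x i) (x' i)

theorem aux_rmulE_mul {A E : Type*} [Ring A] [AddCommGroup E] [Module Aᵐᵒᵖ E] {p q r : ℕ}
    (Q : Matrix (Fin p) (Fin q) A) (P : Matrix (Fin q) (Fin r) A) (y : Fin p → E) :
    rmulE (Q * P) y = rmulE P (rmulE Q y) := by
  funext j
  simp only [rmulE, Matrix.mul_apply, Finset.op_sum, MulOpposite.op_mul, Finset.sum_smul,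
    Finset.smul_sum, mul_smul]
  exact Finset.sum_comm

theorem aux_flat {A E : Type*} [Ring A] [AddCommGroup E] [Module Aᵐᵒᵖ E]
    (hflat : RightFlat A E) {q : ℕ} (k : ℕ) :
    ∀ (P : Matrix (Fin q) (Fin k) A) (x : Fin q → E), rmulE P x = 0 →
    ∃ (r : ℕ) (y : Fin r → E) (Q : Matrix (Fin r) (Fin q) A), Q * P = 0 ∧ x = rmulE Q y := by
  induction k with
  | zero =>
    intro P x _
    refine ⟨q, x, 1, by ext i j; exact j.elim0, ?_⟩
    funext j
    simp only [rmulE, Matrix.one_apply]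
    rw [Finset.sum_eq_single j] <;> simp +contextual
  | succ k ih =>
    intro P x h
    obtain ⟨r, y, Q, hQ, hx⟩ := ih (fun i j => P i j.castSucc) x (by
      funext j; exact congrFun h j.castSucc)
    have h1 : rmulE (Q * P) y = 0 := by rw [aux_rmulE_mul, ← hx, h]
    obtain ⟨s, z, R, hR, hy⟩ := hflat r (fun i => (Q * P) i (Fin.last k)) y
      (congrFun h1 (Fin.last k))
    refine ⟨s, z, R * Q, ?_, ?_⟩
    · rw [Matrix.mul_assoc]
      ext i j
      refine Fin.lastCases ?_ (fun j => ?_) j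
      · exact hR i
      · rw [Matrix.mul_apply]
        refine Finset.sum_eq_zero fun l _ => ?_
        have : (Q * P) l j.castSucc = 0 := congrFun (congrFun hQ l) j
        rw [this, mul_zero]
    · rw [aux_rmulE_mul, hx]
      congr 1
      funext i
      exact hy i

theorem aux_flat_exact {A E : Type*} [Ring A] [AddCommGroup E] [Module Aᵐᵒᵖ E]
    (hflat : RightFlat A E) {p q r : ℕ} (P : Matrix (Fin p) (Fin q) A)
    (P' : Matrix (Fin q) (Fin r) A) (h : Function.Exact (rmulA P) (rmulA P')) :
    Function.Exact (rmulE (E := E) P) (rmulE (E := E) P') := by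
  have hz : P * P' = 0 := by
    ext i j
    have := (h (P i)).2 ⟨Pi.single i 1, by
      funext l
      simp only [rmulA]
      rw [Finset.sum_eq_single i] <;> simp +contextual [Pi.single_apply]⟩
    exact congrFun this j
  intro x
  constructor
  · intro hx
    obtain ⟨s, y, Q, hQ, hxy⟩ := aux_flat hflat r P' x hx
    have : ∀ i, ∃ S : Fin p → A, rmulA P S = Q i := fun i =>
      (h (Q i)).1 (congrFun hQ i)
    choose S hS using this
    have hQS : Q = Matrix.of S * P := by
      ext i j
      exact (congrFun (hS i) j).symm
    exact ⟨rmulE (Matrix.of S) y, by rw [← aux_rmulE_mul, ← hQS, hxy]⟩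
  · rintro ⟨y, rfl⟩
    rw [← aux_rmulE_mul, hz]
    funext j
    simp [rmulE]

theorem aux_bipolar {𝕜 X Y : Type*} [RCLike 𝕜] [AddCommGroup X] [Module 𝕜 X]
    [AddCommGroup Y] [Module 𝕜 Y] (b : X →ₗ[𝕜] Y →ₗ[𝕜] 𝕜) (M : Submodule 𝕜 X)
    (hM : @IsClosed X (weakTopology fun x y => b x y) (M : Set X)) (x : X)
    (hx : ∀ y, (∀ m ∈ M, b m y = 0) → b x y = 0) : x ∈ M := by
  classical
  by_contra hxM
  have ho := hM.isOpen_compl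
  obtain ⟨V, hV, hVM⟩ := isOpen_induced_iff.1 ho
  have hxV : (fun y => b x y) ∈ V := by
    have : x ∈ (M : Set X)ᶜ := hxM
    rw [← hVM] at this
    exact this
  obtain ⟨I, u, hu, hIV⟩ := isOpen_pi_iff.1 hV _ hxV
  let T : X →ₗ[𝕜] (I → 𝕜) := LinearMap.pi fun i => b.flip i
  have hT : T x ∉ M.map T := by
    rintro ⟨m, hm, hmx⟩
    have : (fun y => b m y) ∈ V := by
      apply hIV
      intro i hi
      have h1 : b m i = b x i := congrFun hmx ⟨i, hi⟩
      change b m i ∈ u i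
      rw [h1]
      exact (hu i hi).2
    have h2 : m ∈ (M : Set X)ᶜ := by rw [← hVM]; exact this
    exact h2 hm
  obtain ⟨f, hf, hfM⟩ := Submodule.exists_le_ker_of_notMem hT
  have key : ∀ z, f (T z) = b z (∑ i : I, f (Pi.single i 1) • (i : Y)) := by
    intro z
    rw [LinearMap.pi_apply_eq_sum_univ f (T z)]
    simp only [map_sum, map_smul, smul_eq_mul]
    refine Finset.sum_congr rfl fun i _ => ?_
    rw [mul_comm]
    congr 2
    congr 1
    funext j
    simp [Pi.single_apply, eq_comm]
  refine hf ?_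
  rw [key]
  apply hx
  intro m hm
  rw [← key]
  exact hfM ⟨m, hm, rfl⟩

/-- If the dual pair `(E, E')` is `(K)` (Köthe) over `A` and the right `A`-module `E`
is flat, then the left `A`-module `E'` is `1`-injective: whenever
`A^{1×k₁} →(•P₁) A^{1×k₂} →(•P₂) A^{1×k₃} →(•P₃) A^{1×k₄}` is exact at `A^{1×k₂}` and
at `A^{1×k₃}`, the induced sequence `(E')^{k₃} →(P₂•) (E')^{k₂} →(P₁•) (E')^{k₁}`
is exact. -/
theorem oneInjective_of_flat_of_kothe
    {𝕜 : Type} [RCLike 𝕜] {A : Type} [Ring A] [IsDomain A] [Algebra 𝕜 A]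
    [IsNoetherianRing A] [IsNoetherianRing Aᵐᵒᵖ]
    {E E' : Type} [AddCommGroup E] [Module 𝕜 E] [AddCommGroup E'] [Module 𝕜 E']
    [Module A E'] [IsScalarTower 𝕜 A E'] [SMulCommClass 𝕜 A E']
    [Module Aᵐᵒᵖ E] [IsScalarTower 𝕜 Aᵐᵒᵖ E] [SMulCommClass 𝕜 Aᵐᵒᵖ E]
    (B : E →ₗ[𝕜] E' →ₗ[𝕜] 𝕜)
    (hB₁ : ∀ x : E, (∀ x' : E', B x x' = 0) → x = 0)
    (hB₂ : ∀ x' : E', (∀ x : E, B x x' = 0) → x' = 0)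
    (hsemi : ∀ a : A, @Continuous E' E' (weakTopology fun x' x => B x x')
      (weakTopology fun x' x => B x x') (fun x' => a • x'))
    (hcomp : ∀ (x : E) (a : A) (x' : E'), B (MulOpposite.op a • x) x' = B x (a • x'))
    (hK : ∀ (q r : ℕ), 0 < q → 0 < r → ∀ P : Matrix (Fin q) (Fin r) A,
      @IsClosed _ (sigmaRow B r) (Set.range (rmulE (E := E) P)) ↔
      @IsClosed _ (sigmaCol B q) (Set.range (lmulE' (E' := E') P)))
    (hflat : RightFlat A E) :
    ∀ (k₁ k₂ k₃ k₄ : ℕ) (P₁ : Matrix (Fin k₁) (Fin k₂) A)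
      (P₂ : Matrix (Fin k₂) (Fin k₃) A) (P₃ : Matrix (Fin k₃) (Fin k₄) A),
      Function.Exact (rmulA P₁) (rmulA P₂) →
      Function.Exact (rmulA P₂) (rmulA P₃) →
      Function.Exact (lmulE' (E' := E') P₂) (lmulE' (E' := E') P₁) := by
  intro k₁ k₂ k₃ k₄ P₁ P₂ P₃ h12 h23
  have adj : ∀ {q r : ℕ} (P : Matrix (Fin q) (Fin r) A) (x : Fin q → E) (x' : Fin r → E'),
      ∑ j, B (rmulE P x j) (x' j) = ∑ i, B (x i) (lmulE' P x' i) := by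
    intro q r P x x'
    simp only [rmulE, lmulE', map_sum, LinearMap.sum_apply, hcomp]
    exact Finset.sum_comm
  have nd₁ : ∀ {q : ℕ} (x : Fin q → E), (∀ x' : Fin q → E', ∑ i, B (x i) (x' i) = 0) → x = 0 := by
    intro q x h
    funext i
    refine hB₁ _ fun x' => ?_
    have := h (Pi.single i x')
    rw [Finset.sum_eq_single i (by intro j _ hj; simp [hj]) (by simp)] at this
    simpa using this
  have nd₂ : ∀ {q : ℕ} (x' : Fin q → E'), (∀ x : Fin q → E, ∑ i, B (x i) (x' i) = 0) → x' = 0 := by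
    intro q x' h
    funext i
    refine hB₂ _ fun x => ?_
    have := h (Pi.single i x)
    rw [Finset.sum_eq_single i (by intro j _ hj; simp [hj]) (by simp)] at this
    simpa using this
  have e12 := aux_flat_exact hflat P₁ P₂ h12
  have e23 := aux_flat_exact hflat P₂ P₃ h23
  -- the image of P₂ acting on the right is weakly closed
  have hc : @IsClosed _ (sigmaRow B k₃) (Set.range (rmulE (E := E) P₂)) := by
    have hset : Set.range (rmulE (E := E) P₂) =
        ⋂ y' : Fin k₄ → E', {x | ∑ i, B (x i) (lmulE' P₃ y' i) = 0} := by
      ext x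
      rw [← e23 x, Set.mem_iInter]
      constructor
      · intro hx y'
        change _ = _
        rw [← adj, hx]
        simp
      · intro hx
        exact nd₁ _ fun y' => by rw [adj]; exact hx y'
    rw [hset]
    letI := sigmaRow (E := E) (E' := E') B k₃
    refine isClosed_iInter fun y' => ?_
    have hcont : Continuous fun x : Fin k₃ → E => ∑ i, B (x i) (lmulE' P₃ y' i) :=
      (continuous_apply (lmulE' P₃ y')).comp (continuous_induced_dom
        (f := fun (x : Fin k₃ → E) (x' : Fin k₃ → E') => ∑ i, B (x i) (x' i)))
    exact isClosed_eq hcont continuous_const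
  intro x'
  constructor
  · intro hx'
    have horth : ∀ x : Fin k₂ → E, (∀ m : Fin k₃ → E', ∑ i, B (x i) (lmulE' P₂ m i) = 0) →
        ∑ i, B (x i) (x' i) = 0 := by
      intro x hx
      have : rmulE P₂ x = 0 := nd₁ _ fun m => by rw [adj]; exact hx m
      obtain ⟨w, rfl⟩ := (e12 x).1 this
      rw [adj, hx']
      simp
    rcases Nat.eq_zero_or_pos k₂ with rfl | hk₂
    · exact ⟨0, Subsingleton.elim _ _⟩
    rcases Nat.eq_zero_or_pos k₃ with rfl | hk₃
    · refine ⟨0, ?_⟩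
      rw [nd₂ x' fun x => horth x fun m => by simp [lmulE']]
      funext i
      simp [lmulE']
    have hcl := (hK k₂ k₃ hk₂ hk₃ P₂).1 hc
    let b : (Fin k₂ → E') →ₗ[𝕜] (Fin k₂ → E) →ₗ[𝕜] 𝕜 :=
      LinearMap.mk₂ 𝕜 (fun x' x => ∑ i, B (x i) (x' i))
        (by intros; simp [Finset.sum_add_distrib]) (by intros; simp [Finset.mul_sum])
        (by intros; simp [Finset.sum_add_distrib]) (by intros; simp [Finset.mul_sum])
    let L : (Fin k₃ → E') →ₗ[𝕜] (Fin k₂ → E') :=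
      { toFun := lmulE' P₂
        map_add' := by
          intro u v; funext i; simp [lmulE', Finset.sum_add_distrib]
        map_smul' := by
          intro c u; funext i
          simp only [lmulE', Pi.smul_apply, RingHom.id_apply, Finset.smul_sum]
          exact Finset.sum_congr rfl fun j _ => (smul_comm c _ _).symm }
    have hmem : x' ∈ L.range := by
      refine aux_bipolar b L.range ?_ x' ?_
      · rw [LinearMap.coe_range]; exact hcl
      · intro y hy
        exact horth y fun m => hy _ ⟨m, rfl⟩
    exact hmem
  · rintro ⟨m, rfl⟩
    refine nd₂ _ fun x => ?_
    rw [← adj, ← adj, (e12 _).2 ⟨x, rfl⟩]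
    simp
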